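/- Let f : ℝⁿ → ℝ be a differentiable convex function with f(0) = 0 and f(x) ≥ 0 for all x. Let A, B ∈ ℝ with exp(A) ≥ B > 0, let a ∈ [0,1], and let x, v ∈ ℝⁿ. Define Y = x + a·exp(−A)·v and Z = x + exp(−A)·v. Then exp(A)·⟨Z, ∇f(Y)⟩ ≥ B·f(x) + ⟨v, ∇f(x)⟩. -/

import Mathlib

open Set RealInnerProductSpace

theorem grad_ineq_aux {n : ℕ}
    (f : EuclideanSpace ℝ (Fin n) → ℝ) (g x y : EuclideanSpace ℝ (Fin n))
    (hg : HasGradientAt f g x) (hc : ConvexOn ℝ univ f) :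
    f x + ⟪y, g⟫ ≤ f (x + y) := by
  have h1 : HasDerivAt (fun t : ℝ => f (x + t • y)) ⟪y, g⟫ 0 := by
    have hl : HasDerivAt (fun t : ℝ => x + t • y) y 0 := by
      simpa using ((hasDerivAt_id (0 : ℝ)).smul_const y).const_add x
    have hF : HasFDerivAt f ((InnerProductSpace.toDual ℝ _) g) (x + (0 : ℝ) • y) := by
      simpa using hg.hasFDerivAt
    have := hF.comp_hasDerivAt (0 : ℝ) hl
    rw [InnerProductSpace.toDual_apply_apply, real_inner_comm] at this
    exact this
  have h2 : ConvexOn ℝ univ (fun t : ℝ => f (x + t • y)) := by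
    refine ⟨convex_univ, ?_⟩
    intro s _ t _ p q hp hq hpq
    have := hc.2 (mem_univ (x + s • y)) (mem_univ (x + t • y)) hp hq hpq
    have e : x + (p • s + q • t) • y = p • (x + s • y) + q • (x + t • y) := by
      have : x = (p + q) • x := by rw [hpq, one_smul]
      nth_rewrite 1 [this]
      simp only [smul_eq_mul]
      module
    simp only [e]
    exact this
  have h3 := h2.le_slope_of_hasDerivAt (mem_univ 0) (mem_univ 1) zero_lt_one h1
  simp [slope_def_field] at h3
  linarith

/-- Key pointwise inequality in the Lyapunov analysis of (G-ODE-C):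
`e^A ⟨Z, ∇f(Y)⟩ ≥ B f(x) + ⟨v, ∇f(x)⟩` where `Y = x + a e^{−A} v` and
`Z = x + e^{−A} v`. -/
theorem godec_key_inequality {n : ℕ}
    (f : EuclideanSpace ℝ (Fin n) → ℝ)
    (f' : EuclideanSpace ℝ (Fin n) → EuclideanSpace ℝ (Fin n))
    (hf' : ∀ x, HasGradientAt f (f' x) x)
    (hfconv : ConvexOn ℝ univ f)
    (hf0 : f 0 = 0)
    (hfnn : ∀ x, 0 ≤ f x)
    (A B : ℝ) (hB : 0 < B) (hAB : B ≤ Real.exp A)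
    (a : ℝ) (ha : a ∈ Icc (0 : ℝ) 1)
    (x v Y Z : EuclideanSpace ℝ (Fin n))
    (hY : Y = x + (a * Real.exp (-A)) • v)
    (hZ : Z = x + Real.exp (-A) • v) :
    B * f x + ⟪v, f' x⟫ ≤ Real.exp A * ⟪Z, f' Y⟫ := by
  obtain ⟨ha0, ha1⟩ := ha
  have hE : Real.exp A * Real.exp (-A) = 1 := by rw [← Real.exp_add]; simp
  have hEp := Real.exp_pos A
  have hep := Real.exp_pos (-A)
  generalize Real.exp A = E at *
  generalize Real.exp (-A) = e at *
  have k1 := grad_ineq_aux f _ x ((a * e) • v) (hf' x) hfconv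
  have k2 := grad_ineq_aux f _ Y (-((a * e) • v)) (hf' Y) hfconv
  have k3 := grad_ineq_aux f _ Y (-Y) (hf' Y) hfconv
  have hx : Y + -((a * e) • v) = x := by rw [hY]; abel
  rw [← hY] at k1
  rw [hx] at k2
  rw [add_neg_cancel, hf0] at k3
  simp only [inner_neg_left, real_inner_smul_left] at k1 k2 k3
  have hm : ⟪v, f' x⟫ ≤ ⟪v, f' Y⟫ := by
    rcases ha0.eq_or_lt with h | h
    · have : Y = x := by rw [hY, ← h]; simp
      rw [this]
    · have : 0 < a * e := by positivity
      exact le_of_mul_le_mul_left (by linarith) this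
  have hZ' : Z = Y + ((1 - a) * e) • v := by rw [hZ, hY]; module
  rw [hZ', inner_add_left, real_inner_smul_left]
  have q1 : E * (f x + a * e * ⟪v, f' x⟫) ≤ E * ⟪Y, f' Y⟫ :=
    mul_le_mul_of_nonneg_left (by linarith) hEp.le
  have q2 : (1 - a) * ⟪v, f' x⟫ ≤ (1 - a) * ⟪v, f' Y⟫ :=
    mul_le_mul_of_nonneg_left hm (by linarith)
  have q3 : B * f x ≤ E * f x := mul_le_mul_of_nonneg_right hAB (hfnn x)
  have r1 : E * (f x + a * e * ⟪v, f' x⟫) = E * f x + a * ⟪v, f' x⟫ := by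
    linear_combination (a * ⟪v, f' x⟫) * hE
  have r2 : E * (⟪Y, f' Y⟫ + (1 - a) * e * ⟪v, f' Y⟫)
      = E * ⟪Y, f' Y⟫ + (1 - a) * ⟪v, f' Y⟫ := by
    linear_combination ((1 - a) * ⟪v, f' Y⟫) * hE
  rw [r2]
  linarith
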